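/- arXiv:1904.11910 — 3 statements merged into one kernel-verified Lean document; each statement's English description precedes it below -/
import Mathlib

section
/- Let d ≥ 1, let Σ be a real positive semidefinite d×d matrix, and let X be a random vector in ℝ^d whose law is the centered Gaussian measure N(0,Σ). Let A be a real symmetric positive semidefinite d×d matrix, not zero, and set Q = ⟨X, A X⟩ (so Q ≥ 0 almost surely); assume E[Q] > 0. Then for every θ with 0 ≤ θ < 1/2 one has E[ exp( θ Q / E[Q] ) ] ≤ (1 − 2θ)^{-1/2}. -/
/-!
Factor `A = Bᵀ B`, so that `Q = ∑ k, Y k ^ 2` with `Y = B X`. Each `Y k` is a centered real Gaussian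
with some variance `v k`, hence `E[Q] = ∑ k, v k =: T`. The weights `v k / T` sum to one and
`Q / T = ∑ k, (v k / T) * (Y k ^ 2 / v k)` almost surely (if `v k = 0`, then `Y k = 0` almost
surely). Convexity of the exponential gives
`exp (θ Q / T) ≤ ∑ k, (v k / T) * exp (θ Y k ^ 2 / v k)`, and each exponential on the right with
`v k ≠ 0` has expectation exactly `(1 - 2θ)^(-1/2)`. Neither independence of the `Y k` nor a
diagonalization of the covariance is needed.
-/

open MeasureTheory
open scoped BigOperators

/-- A measure on `Fin d → ℝ` is the centered Gaussian law with covariance matrix `S`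
if its characteristic function is `t ↦ exp (-(1/2) ⟨t, S t⟩)`. -/
def IsCenteredGaussianLaw {d : ℕ} (S : Matrix (Fin d) (Fin d) ℝ)
    (μ : Measure (Fin d → ℝ)) : Prop :=
  ∀ t : Fin d → ℝ,
    ∫ x, Complex.exp (Complex.I * ((∑ i, t i * x i : ℝ) : ℂ)) ∂μ =
      Complex.exp (-(1 / 2 : ℂ) * ((∑ i, ∑ j, t i * S i j * t j : ℝ) : ℂ))

open ProbabilityTheory
open scoped NNReal

/-- The exponential moment of the square of a standard normal, written for `N(0, v)`. -/
lemma integral_exp_sq_div_gaussianReal {v : ℝ≥0} (hv : v ≠ 0) {θ : ℝ} (hθ : θ < 1 / 2) :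
    ∫ x, Real.exp (θ * (x ^ 2 / v)) ∂(gaussianReal 0 v) = (1 - 2 * θ) ^ (-(1 / 2 : ℝ)) := by
  have hv' : (0 : ℝ) < v := by positivity
  have hb : 0 < 1 - 2 * θ := by linarith
  rw [integral_gaussianReal_eq_integral_smul hv]
  have h : ∀ x : ℝ, gaussianPDFReal 0 v x • Real.exp (θ * (x ^ 2 / v)) =
      (√(2 * Real.pi * v))⁻¹ * Real.exp (-((1 - 2 * θ) / (2 * v)) * x ^ 2) := by
    intro x
    rw [gaussianPDFReal, smul_eq_mul, mul_assoc, ← Real.exp_add]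
    congr 2
    field_simp
    ring
  simp_rw [h]
  rw [integral_const_mul, integral_gaussian, Real.rpow_neg hb.le, ← Real.sqrt_eq_rpow,
    ← Real.sqrt_inv, ← Real.sqrt_inv, ← Real.sqrt_mul (by positivity)]
  congr 1
  field_simp

/-- A linear form of a centered Gaussian vector is a centered real Gaussian. -/
lemma map_linear_eq_gaussianReal {Ω : Type*} [MeasurableSpace Ω] (P : Measure Ω)
    [IsProbabilityMeasure P] {d : ℕ} {S : Matrix (Fin d) (Fin d) ℝ} (hS : S.PosSemidef)
    {X : Ω → (Fin d → ℝ)} (hX : Measurable X) (hlaw : IsCenteredGaussianLaw S (P.map X))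
    (b : Fin d → ℝ) :
    P.map (fun ω ↦ ∑ i, b i * X ω i) =
      gaussianReal 0 (∑ i, ∑ j, b i * S i j * b j).toNNReal := by
  have hm : Measurable (fun ω ↦ ∑ i, b i * X ω i) := by fun_prop
  have hnn : 0 ≤ ∑ i, ∑ j, b i * S i j * b j := by
    have := hS.dotProduct_mulVec_nonneg b
    simpa [dotProduct, Matrix.mulVec, Finset.mul_sum, mul_assoc] using this
  have : IsProbabilityMeasure (P.map (fun ω ↦ ∑ i, b i * X ω i)) :=
    Measure.isProbabilityMeasure_map hm.aemeasurable
  apply Measure.ext_of_charFun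
  ext t
  have h := hlaw (fun i ↦ t * b i)
  rw [integral_map hX.aemeasurable (Measurable.aestronglyMeasurable (by fun_prop))] at h
  rw [charFun_gaussianReal, charFun_apply_real,
    integral_map hm.aemeasurable (Measurable.aestronglyMeasurable (by fun_prop))]
  have e1 : ∀ ω, Complex.exp (t * ((∑ i, b i * X ω i : ℝ) : ℂ) * Complex.I) =
      Complex.exp (Complex.I * ((∑ i, t * b i * X ω i : ℝ) : ℂ)) := by
    intro ω
    congr 1
    simp_rw [mul_assoc t, ← Finset.mul_sum]
    push_cast
    ring
  simp_rw [e1]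
  rw [h]
  congr 1
  have e2 : ∑ i, ∑ j, t * b i * S i j * (t * b j) = t ^ 2 * ∑ i, ∑ j, b i * S i j * b j := by
    simp_rw [Finset.mul_sum]
    refine Finset.sum_congr rfl fun i _ ↦ Finset.sum_congr rfl fun j _ ↦ by ring
  rw [e2, Real.coe_toNNReal _ hnn]
  push_cast
  ring

theorem stmt0 {Ω : Type*} [MeasurableSpace Ω] (P : Measure Ω) [IsProbabilityMeasure P]
    (d : ℕ) (hd : 1 ≤ d)
    (S : Matrix (Fin d) (Fin d) ℝ) (hS : S.PosSemidef)
    (X : Ω → (Fin d → ℝ)) (hX : Measurable X)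
    (hlaw : IsCenteredGaussianLaw S (P.map X))
    (A : Matrix (Fin d) (Fin d) ℝ) (hA : A.PosSemidef) (hA0 : A ≠ 0)
    (Q : Ω → ℝ) (hQ : ∀ ω, Q ω = ∑ i, ∑ j, X ω i * A i j * X ω j)
    (hEQ : 0 < ∫ ω, Q ω ∂P)
    (θ : ℝ) (hθ0 : 0 ≤ θ) (hθ : θ < 1 / 2) :
    ∫ ω, Real.exp (θ * Q ω / ∫ ω', Q ω' ∂P) ∂P ≤ (1 - 2 * θ) ^ (-(1 / 2 : ℝ)) := by
  obtain ⟨B, hB⟩ : ∃ B : Matrix (Fin d) (Fin d) ℝ, A = B.conjTranspose * B := by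
    open scoped MatrixOrder in
    exact CStarAlgebra.nonneg_iff_eq_star_mul_self.mp hA.nonneg
  set Y : Fin d → Ω → ℝ := fun k ω ↦ ∑ i, B k i * X ω i with hY
  set v : Fin d → ℝ≥0 := fun k ↦ (∑ i, ∑ j, B k i * S i j * B k j).toNNReal
  have hYm : ∀ k, Measurable (Y k) := fun k ↦ by simp only [hY]; fun_prop
  have hYlaw : ∀ k, P.map (Y k) = gaussianReal 0 (v k) := fun k ↦
    map_linear_eq_gaussianReal P hS hX hlaw (B k)
  have hQY : ∀ ω, Q ω = ∑ k, Y k ω ^ 2 := by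
    intro ω
    simp only [hQ, hY, hB, Matrix.mul_apply, Matrix.conjTranspose_apply, star_trivial, sq,
      Finset.mul_sum, Finset.sum_mul]
    rw [Finset.sum_comm_cycle]
    refine Finset.sum_congr rfl fun k _ ↦ ?_
    rw [Finset.sum_comm]
    refine Finset.sum_congr rfl fun i _ ↦ Finset.sum_congr rfl fun j _ ↦ by ring
  have hsqi : ∀ k, Integrable (fun x : ℝ ↦ x ^ 2) (gaussianReal 0 (v k)) := fun k ↦
    (memLp_id_gaussianReal 2).integrable_sq
  have hsq : ∀ k, ∫ x, x ^ 2 ∂(gaussianReal 0 (v k)) = v k := by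
    intro k
    have h := variance_id_gaussianReal (μ := 0) (v := v k)
    rwa [variance_of_integral_eq_zero (by fun_prop) (by simp)] at h
  have hT : ∫ ω, Q ω ∂P = ∑ k, (v k : ℝ) := by
    simp_rw [hQY]
    rw [integral_finsetSum]
    · refine Finset.sum_congr rfl fun k _ ↦ ?_
      rw [← hsq k, ← hYlaw k, integral_map (hYm k).aemeasurable (by fun_prop)]
    · intro k _
      have := hsqi k
      rw [← hYlaw k] at this
      exact this.comp_measurable (hYm k)
  rw [hT] at hEQ ⊢
  set T : ℝ := ∑ k, (v k : ℝ) with hTdef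
  have hYz : ∀ᵐ ω ∂P, ∀ k, Y k ω ^ 2 = v k * (Y k ω ^ 2 / v k) := by
    rw [ae_all_iff]
    intro k
    by_cases hk : v k = 0
    · have h := hYlaw k
      rw [hk, gaussianReal_zero_var] at h
      have h0 : ∀ᵐ x ∂(P.map (Y k)), x = 0 := by rw [h, ae_dirac_eq]; rfl
      filter_upwards [ae_of_ae_map (hYm k).aemeasurable h0] with ω hω
      simp [hω]
    · refine ae_of_all _ fun ω ↦ ?_
      have : (v k : ℝ) ≠ 0 := by exact_mod_cast hk
      field_simp
  have hmom : ∀ k, v k ≠ 0 →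
      ∫ ω, Real.exp (θ * (Y k ω ^ 2 / v k)) ∂P = (1 - 2 * θ) ^ (-(1 / 2 : ℝ)) := by
    intro k hk
    rw [← integral_exp_sq_div_gaussianReal hk hθ, ← hYlaw k,
      integral_map (hYm k).aemeasurable (Measurable.aestronglyMeasurable (by fun_prop))]
  have hpos : 0 < (1 - 2 * θ) ^ (-(1 / 2 : ℝ)) := Real.rpow_pos_of_pos (by linarith) _
  have hint : ∀ k, Integrable (fun ω ↦ v k / T * Real.exp (θ * (Y k ω ^ 2 / v k))) P := by
    intro k
    by_cases hk : v k = 0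
    · simp [hk]
    -- A nonzero Bochner integral forces integrability.
    · exact (not_imp_comm.1 integral_undef (by rw [hmom k hk]; exact hpos.ne')).const_mul _
  have hw : ∑ k, (v k : ℝ) / T = 1 := by
    rw [← Finset.sum_div, ← hTdef, div_self hEQ.ne']
  calc ∫ ω, Real.exp (θ * Q ω / T) ∂P
      ≤ ∫ ω, ∑ k, v k / T * Real.exp (θ * (Y k ω ^ 2 / v k)) ∂P := by
        refine integral_mono_of_nonneg (ae_of_all _ fun ω ↦ (Real.exp_pos _).le)
          (integrable_finsetSum _ fun k _ ↦ hint k) ?_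
        filter_upwards [hYz] with ω hω
        have e : θ * Q ω / T = ∑ k, (v k : ℝ) / T * (θ * (Y k ω ^ 2 / v k)) := by
          rw [hQY, Finset.mul_sum, Finset.sum_div]
          refine Finset.sum_congr rfl fun k _ ↦ ?_
          conv_lhs => rw [hω k]
          ring
        have hJ := convexOn_exp.map_sum_le (t := Finset.univ) (w := fun k ↦ (v k : ℝ) / T)
          (p := fun k ↦ θ * (Y k ω ^ 2 / v k)) (fun k _ ↦ by positivity) hw
          (fun _ _ ↦ Set.mem_univ _)
        simp only [smul_eq_mul] at hJ
        rw [e]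
        exact hJ
    _ = ∑ k, (v k : ℝ) / T * (1 - 2 * θ) ^ (-(1 / 2 : ℝ)) := by
        rw [integral_finsetSum _ fun k _ ↦ hint k]
        refine Finset.sum_congr rfl fun k _ ↦ ?_
        rw [integral_const_mul]
        by_cases hk : v k = 0
        · simp [hk]
        · rw [hmom k hk]
    _ = (1 - 2 * θ) ^ (-(1 / 2 : ℝ)) := by rw [← Finset.sum_mul, hw, one_mul]
end

section
/- Let k ∈ ℂ, let q : ℝ → ℂ be continuous, and let ψ₊, ψ₋ : ℝ → ℂ be twice continuously differentiable functions satisfying −ψ₊'' + qψ₊ = −k²ψ₊ and −ψ₋'' + qψ₋ = −k²ψ₋ on ℝ, normalized so that the Wronskian ψ₊(x)ψ₋'(x) − ψ₊'(x)ψ₋(x) = 1 for all x. Suppose the product g := ψ₊ψ₋ is nowhere vanishing. Then for every x ∈ ℝ: q(x) = ( g'/(2g) )'(x) + ( g'(x)/(2g(x)) )² + 1/(4 g(x)²) − k². -/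
/-!
Write `a = ψp` and `b = ψm`. The two equations give `g' = a' b + a b'` and
`g'' = 2 (q + k²) g + 2 a' b'`, while the Wronskian relation gives
`g'² - 1 = (a' b + a b')² - (a b' - a' b)² = 4 g a' b'`. Since
`(g' / (2 g))' + (g' / (2 g))² = g'' / (2 g) - g'² / (4 g²)`, substituting both facts makes the
terms in `a' b'` cancel, leaving `q + k²`.
-/

theorem stmt8 (k : ℂ) (q ψp ψm : ℝ → ℂ)
    (hq : Continuous q) (hψp : ContDiff ℝ 2 ψp) (hψm : ContDiff ℝ 2 ψm)
    (hODEp : ∀ x : ℝ, -(deriv (deriv ψp) x) + q x * ψp x = -k ^ 2 * ψp x)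
    (hODEm : ∀ x : ℝ, -(deriv (deriv ψm) x) + q x * ψm x = -k ^ 2 * ψm x)
    (hW : ∀ x : ℝ, ψp x * deriv ψm x - deriv ψp x * ψm x = 1)
    (g : ℝ → ℂ) (hg : ∀ x, g x = ψp x * ψm x) (hg0 : ∀ x, g x ≠ 0) :
    ∀ x : ℝ, q x =
      deriv (fun y => deriv g y / (2 * g y)) x + (deriv g x / (2 * g x)) ^ 2 +
        1 / (4 * g x ^ 2) - k ^ 2 := by
  have hdp : ∀ x, HasDerivAt ψp (deriv ψp x) x := fun x =>
    (hψp.differentiable (by norm_num) x).hasDerivAt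
  have hdm : ∀ x, HasDerivAt ψm (deriv ψm x) x := fun x =>
    (hψm.differentiable (by norm_num) x).hasDerivAt
  have hddp : ∀ x, HasDerivAt (deriv ψp) ((q x + k ^ 2) * ψp x) x := fun x => by
    have h : deriv (deriv ψp) x = (q x + k ^ 2) * ψp x := by linear_combination -hODEp x
    exact h ▸ (hψp.differentiable_deriv_two x).hasDerivAt
  have hddm : ∀ x, HasDerivAt (deriv ψm) ((q x + k ^ 2) * ψm x) x := fun x => by
    have h : deriv (deriv ψm) x = (q x + k ^ 2) * ψm x := by linear_combination -hODEm x
    exact h ▸ (hψm.differentiable_deriv_two x).hasDerivAt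
  obtain rfl : g = fun x => ψp x * ψm x := funext hg
  have hg' : deriv (fun x => ψp x * ψm x) = fun x => deriv ψp x * ψm x + ψp x * deriv ψm x :=
    funext fun x => ((hdp x).fun_mul (hdm x)).deriv
  intro x
  have hx : ψp x * ψm x ≠ 0 := hg0 x
  have hp : ψp x ≠ 0 := left_ne_zero_of_mul hx
  have hm : ψm x ≠ 0 := right_ne_zero_of_mul hx
  have hquot := ((((hddp x).fun_mul (hdm x)).fun_add ((hdp x).fun_mul (hddm x))).fun_div
    (((hdp x).fun_mul (hdm x)).const_mul (2 : ℂ)) (mul_ne_zero two_ne_zero hx)).deriv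
  simp only [hg']
  rw [hquot]
  have hW2 : (ψp x * deriv ψm x - deriv ψp x * ψm x) ^ 2 = 1 := by rw [hW x, one_pow]
  -- Writing the numerator `1` as the squared Wronskian turns the goal into a rational identity.
  rw [← hW2]
  field_simp
  ring
end

section
/- There exist constants 0 < c ≤ C such that for every a ∈ ℝ and every σ > 0: c (a² + σ²)^{-3/8} ≤ ∫₀^∞ τ^{1/4} ( a² + (σ + τ)² )^{-1} dτ ≤ C (a² + σ²)^{-3/8}. -/
/-!
With `M = √(a² + σ²)`, the inequalities `0 ≤ 2στ ≤ σ² + τ²` show that `a² + (σ + τ)²` lies between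
`M² + τ²` and `2 (M² + τ²)`. The substitution `τ = M x` gives
`∫₀^∞ τ^{1/4} (M² + τ²)⁻¹ dτ = J M^{-3/4}` where `J = ∫₀^∞ x^{1/4} (1 + x²)⁻¹ dx` is finite and
positive, so the constants `J / 2` and `J` work.
-/

open MeasureTheory

/-- The integrand is dominated by `2 (1 + x)^{-7/4}`. -/
lemma integrableOn_profile :
    IntegrableOn (fun x : ℝ => x ^ (1 / 4 : ℝ) * (1 + x ^ 2)⁻¹) (Set.Ioi 0) := by
  have h := (integrableOn_add_rpow_Ioi_of_lt (a := -(7 / 4)) (c := 0) (m := 1)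
    (by norm_num) (by norm_num)).const_mul 2
  refine Integrable.mono' h (Measurable.aestronglyMeasurable (by fun_prop)) ?_
  refine (ae_restrict_iff' measurableSet_Ioi).2 (Filter.Eventually.of_forall fun x hx => ?_)
  have hx : 0 < x := hx
  rw [Real.norm_of_nonneg (by positivity)]
  have h1 : (x + 1) ^ (-(7 / 4) : ℝ) = (x + 1) ^ (1 / 4 : ℝ) * ((x + 1) ^ 2)⁻¹ := by
    rw [← Real.rpow_natCast, ← Real.rpow_neg (by positivity), ← Real.rpow_add (by positivity)]
    norm_num
  have h2 : (1 + x ^ 2)⁻¹ ≤ 2 * ((x + 1) ^ 2)⁻¹ := by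
    rw [← div_eq_mul_inv, inv_eq_one_div, div_le_div_iff₀ (by positivity) (by positivity)]
    nlinarith [sq_nonneg (x - 1)]
  have h3 : x ^ (1 / 4 : ℝ) ≤ (x + 1) ^ (1 / 4 : ℝ) :=
    Real.rpow_le_rpow hx.le (by linarith) (by norm_num)
  calc x ^ (1 / 4 : ℝ) * (1 + x ^ 2)⁻¹
      ≤ (x + 1) ^ (1 / 4 : ℝ) * (2 * ((x + 1) ^ 2)⁻¹) := by gcongr
    _ = 2 * (x + 1) ^ (-(7 / 4) : ℝ) := by rw [h1]; ring

lemma integral_profile_pos :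
    0 < ∫ x in Set.Ioi (0 : ℝ), x ^ (1 / 4 : ℝ) * (1 + x ^ 2)⁻¹ := by
  rw [setIntegral_pos_iff_support_of_nonneg_ae _ integrableOn_profile]
  · have : Set.Ioi (0 : ℝ) ⊆
        Function.support (fun x : ℝ => x ^ (1 / 4 : ℝ) * (1 + x ^ 2)⁻¹) ∩ Set.Ioi 0 := by
      intro x hx
      have hx' : 0 < x := hx
      refine ⟨?_, hx⟩
      rw [Function.mem_support]
      positivity
    exact lt_of_lt_of_le (by simp) (measure_mono this)
  · refine (ae_restrict_iff' measurableSet_Ioi).2 (Filter.Eventually.of_forall fun x hx => ?_)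
    have hx' : 0 < x := hx
    simp only [Pi.zero_apply]
    positivity

lemma profile_comp_mul {M x : ℝ} (hM : 0 < M) (hx : 0 < x) :
    (M * x) ^ (1 / 4 : ℝ) * (M ^ 2 + (M * x) ^ 2)⁻¹ =
      (M ^ (1 / 4 : ℝ) * (M ^ 2)⁻¹) * (x ^ (1 / 4 : ℝ) * (1 + x ^ 2)⁻¹) := by
  rw [Real.mul_rpow hM.le hx.le, show M ^ 2 + (M * x) ^ 2 = M ^ 2 * (1 + x ^ 2) by ring, mul_inv]
  ring

lemma integrableOn_scaled {M : ℝ} (hM : 0 < M) :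
    IntegrableOn (fun x : ℝ => x ^ (1 / 4 : ℝ) * (M ^ 2 + x ^ 2)⁻¹) (Set.Ioi 0) := by
  have h := integrableOn_Ioi_comp_mul_left_iff
    (fun x : ℝ => x ^ (1 / 4 : ℝ) * (M ^ 2 + x ^ 2)⁻¹) 0 hM
  rw [mul_zero] at h
  rw [← h]
  exact IntegrableOn.congr_fun (integrableOn_profile.const_mul (M ^ (1 / 4 : ℝ) * (M ^ 2)⁻¹))
    (fun x hx => (profile_comp_mul hM hx).symm) measurableSet_Ioi

lemma integral_scaled {M : ℝ} (hM : 0 < M) :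
    ∫ x in Set.Ioi (0 : ℝ), x ^ (1 / 4 : ℝ) * (M ^ 2 + x ^ 2)⁻¹ =
      (∫ x in Set.Ioi (0 : ℝ), x ^ (1 / 4 : ℝ) * (1 + x ^ 2)⁻¹) * (M ^ 2) ^ (-(3 / 8 : ℝ)) := by
  have h := integral_comp_mul_left_Ioi
    (fun x : ℝ => x ^ (1 / 4 : ℝ) * (M ^ 2 + x ^ 2)⁻¹) 0 hM
  rw [mul_zero, setIntegral_congr_fun measurableSet_Ioi (fun x hx => profile_comp_mul hM hx),
    integral_const_mul, smul_eq_mul] at h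
  have h1 : (M ^ 2) ^ (-(3 / 8 : ℝ)) = M * (M ^ (1 / 4 : ℝ) * (M ^ 2)⁻¹) := by
    have : M * (M ^ (1 / 4 : ℝ) * (M ^ 2)⁻¹)
        = M ^ (1 : ℝ) * (M ^ (1 / 4 : ℝ) * M ^ (-2 : ℝ)) := by
      rw [Real.rpow_one, Real.rpow_neg hM.le, Real.rpow_two]
    rw [this, ← Real.rpow_add hM, ← Real.rpow_add hM, ← Real.rpow_two, ← Real.rpow_mul hM.le]
    norm_num
  rw [h1]
  calc _ = M * (M⁻¹ * ∫ x in Set.Ioi (0 : ℝ), x ^ (1 / 4 : ℝ) * (M ^ 2 + x ^ 2)⁻¹) := by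
        rw [mul_inv_cancel_left₀ hM.ne']
    _ = _ := by rw [← h]; ring

theorem stmt10 : ∃ c C : ℝ, 0 < c ∧ c ≤ C ∧
    ∀ a σ : ℝ, 0 < σ →
      (c * (a ^ 2 + σ ^ 2) ^ (-(3 / 8 : ℝ)) ≤
          ∫ τ in Set.Ioi (0 : ℝ), τ ^ (1 / 4 : ℝ) * (a ^ 2 + (σ + τ) ^ 2)⁻¹) ∧
        (∫ τ in Set.Ioi (0 : ℝ), τ ^ (1 / 4 : ℝ) * (a ^ 2 + (σ + τ) ^ 2)⁻¹) ≤
          C * (a ^ 2 + σ ^ 2) ^ (-(3 / 8 : ℝ)) := by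
  have hJ := integral_profile_pos
  refine ⟨(∫ x in Set.Ioi (0 : ℝ), x ^ (1 / 4 : ℝ) * (1 + x ^ 2)⁻¹) / 2,
    ∫ x in Set.Ioi (0 : ℝ), x ^ (1 / 4 : ℝ) * (1 + x ^ 2)⁻¹, by linarith, by linarith, ?_⟩
  intro a σ hσ
  obtain ⟨M, hM, hM2⟩ : ∃ M : ℝ, 0 < M ∧ M ^ 2 = a ^ 2 + σ ^ 2 :=
    ⟨√(a ^ 2 + σ ^ 2), by positivity, Real.sq_sqrt (by positivity)⟩
  have hI := integrableOn_scaled hM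
  have hle : ∀ τ ∈ Set.Ioi (0 : ℝ), τ ^ (1 / 4 : ℝ) * (a ^ 2 + (σ + τ) ^ 2)⁻¹ ≤
      τ ^ (1 / 4 : ℝ) * (M ^ 2 + τ ^ 2)⁻¹ := by
    intro τ hτ
    have hτ : 0 < τ := hτ
    gcongr ?_ * ?_⁻¹
    nlinarith [mul_pos hσ hτ]
  have hge : ∀ τ ∈ Set.Ioi (0 : ℝ), 1 / 2 * (τ ^ (1 / 4 : ℝ) * (M ^ 2 + τ ^ 2)⁻¹) ≤
      τ ^ (1 / 4 : ℝ) * (a ^ 2 + (σ + τ) ^ 2)⁻¹ := by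
    intro τ hτ
    have hτ : 0 < τ := hτ
    have : (2 * (M ^ 2 + τ ^ 2))⁻¹ ≤ (a ^ 2 + (σ + τ) ^ 2)⁻¹ := by
      gcongr
      nlinarith [sq_nonneg (σ - τ), sq_nonneg a]
    calc 1 / 2 * (τ ^ (1 / 4 : ℝ) * (M ^ 2 + τ ^ 2)⁻¹)
        = τ ^ (1 / 4 : ℝ) * (2 * (M ^ 2 + τ ^ 2))⁻¹ := by rw [mul_inv]; ring
      _ ≤ _ := by gcongr
  have hF : IntegrableOn (fun τ : ℝ => τ ^ (1 / 4 : ℝ) * (a ^ 2 + (σ + τ) ^ 2)⁻¹)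
      (Set.Ioi 0) := by
    refine Integrable.mono' hI (Measurable.aestronglyMeasurable (by fun_prop)) ?_
    refine (ae_restrict_iff' measurableSet_Ioi).2 (Filter.Eventually.of_forall fun τ hτ => ?_)
    have hτ' : 0 < τ := hτ
    rw [Real.norm_of_nonneg (by positivity)]
    exact hle τ hτ
  rw [← hM2]
  constructor
  · have h := setIntegral_mono_on (hI.const_mul (1 / 2)) hF measurableSet_Ioi hge
    rw [integral_const_mul, integral_scaled hM] at h
    linarith
  · rw [← integral_scaled hM]
    exact setIntegral_mono_on hF hI measurableSet_Ioi hle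
end
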